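/- Assume the coercivity property: there exists ν > 0 such that B(f) ≥ ν ‖f‖²_{H¹} for every f ∈ K. Then there exist positive constants ν₁, ν₂ > 0 such that for EVERY H¹ function f = f₁ + i f₂ one has B(f) ≥ ν₁ ‖f‖²_{H¹} − ν₂ ( (∫ Q f₁ dx)² + Σ_{j=1}^d (∫ x_j Q f₁ dx)² + (∫ |x|² Q f₁ dx)² + Σ_{j=1}^d (∫ ∂_{x_j}Q f₂ dx)² + (∫ ΛQ f₂ dx)² + (∫ ρ f₂ dx)² ). -/

import Mathlib

noncomputable section

open MeasureTheory

/-- Partial derivative of a real-valued function on `ℝ^d` in the `i`-th coordinate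
direction. -/
def pd {d : ℕ} (f : EuclideanSpace ℝ (Fin d) → ℝ) (i : Fin d)
    (x : EuclideanSpace ℝ (Fin d)) : ℝ :=
  fderiv ℝ f x (EuclideanSpace.single i 1)

/-- Laplacian of a real-valued function on `ℝ^d`. -/
def lap {d : ℕ} (f : EuclideanSpace ℝ (Fin d) → ℝ)
    (x : EuclideanSpace ℝ (Fin d)) : ℝ :=
  ∑ i, pd (pd f i) i x

/-- The complex-valued function `f = f₁ + i f₂` is an `H¹` function: `f₁, f₂` are
continuously differentiable, and `f` and `∇f` are square integrable. -/
def IsH1 {d : ℕ} (f₁ f₂ : EuclideanSpace ℝ (Fin d) → ℝ) : Prop :=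
  ContDiff ℝ 1 f₁ ∧ ContDiff ℝ 1 f₂ ∧
  Integrable (fun x : EuclideanSpace ℝ (Fin d) => f₁ x ^ 2 + f₂ x ^ 2) ∧
  Integrable (fun x : EuclideanSpace ℝ (Fin d) =>
    ∑ i, (pd f₁ i x ^ 2 + pd f₂ i x ^ 2))

/-- The squared `H¹` norm `∫ |f|² + |∇f|²` of `f = f₁ + i f₂`. -/
def H1normSq {d : ℕ} (f₁ f₂ : EuclideanSpace ℝ (Fin d) → ℝ) : ℝ :=
  (∫ x : EuclideanSpace ℝ (Fin d), (f₁ x ^ 2 + f₂ x ^ 2))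
    + ∫ x : EuclideanSpace ℝ (Fin d), ∑ i, (pd f₁ i x ^ 2 + pd f₂ i x ^ 2)

/-- The quadratic form `B(f) = ⟨L₊f₁, f₁⟩ + ⟨L₋f₂, f₂⟩` associated to the linearized
operators around the ground state `Q`. -/
def Bform {d : ℕ} (Q f₁ f₂ : EuclideanSpace ℝ (Fin d) → ℝ) : ℝ :=
  (∫ x : EuclideanSpace ℝ (Fin d),
      ((∑ i, pd f₁ i x ^ 2) + f₁ x ^ 2
        - (1 + 4 / (d : ℝ)) * Q x ^ ((4 : ℝ) / d) * f₁ x ^ 2))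
    + ∫ x : EuclideanSpace ℝ (Fin d),
        ((∑ i, pd f₂ i x ^ 2) + f₂ x ^ 2 - Q x ^ ((4 : ℝ) / d) * f₂ x ^ 2)

/-- Membership in the set `K` of `H¹` functions `f = f₁ + i f₂` satisfying the
orthogonality conditions. -/
def InKset {d : ℕ} (Q ρ f₁ f₂ : EuclideanSpace ℝ (Fin d) → ℝ) : Prop :=
  (∫ x : EuclideanSpace ℝ (Fin d), Q x * f₁ x) = 0 ∧
  (∀ j, (∫ x : EuclideanSpace ℝ (Fin d), x j * Q x * f₁ x) = 0) ∧
  (∫ x : EuclideanSpace ℝ (Fin d), ‖x‖ ^ 2 * Q x * f₁ x) = 0 ∧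
  (∀ j, (∫ x : EuclideanSpace ℝ (Fin d), pd Q j x * f₂ x) = 0) ∧
  (∫ x : EuclideanSpace ℝ (Fin d),
      ((d : ℝ) / 2 * Q x + ∑ i, x i * pd Q i x) * f₂ x) = 0 ∧
  (∫ x : EuclideanSpace ℝ (Fin d), ρ x * f₂ x) = 0

/-!
Choose, linearly in the finitely many constraint values of `f`, an `h` with the same constraint
values as `f`. Then `g = f - h` lies in `K`, so `B` is coercive at `g`, while `h` is controlled by
the constraint values because it ranges over a finite-dimensional space. Young's inequality absorbs
the cross term of `B (g + h)` into the coercivity at `g`; it applies because the potentials are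
bounded, so that `B` differs from a nonnegative form by a multiple of the squared `H¹` norm.
-/

lemma exists_linearMap_apply_apply_apply_eq {K V W : Type*} [Field K] [AddCommGroup V]
    [Module K V] [AddCommGroup W] [Module K W] (L : V →ₗ[K] W) :
    ∃ S : W →ₗ[K] V, ∀ f, L (S (L f)) = L f := by
  obtain ⟨T, hT⟩ := L.rangeRestrict.exists_rightInverse_of_surjective L.range_rangeRestrict
  obtain ⟨S, hS⟩ := T.exists_extend
  refine ⟨S, fun f => ?_⟩
  have hST : S (L f) = T (L.rangeRestrict f) := LinearMap.congr_fun hS (L.rangeRestrict f)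
  rw [hST]
  exact congrArg Subtype.val (LinearMap.congr_fun hT (L.rangeRestrict f))

section QuadraticForm

variable {𝕜 V : Type*} [Field 𝕜] [LinearOrder 𝕜] [IsStrictOrderedRing 𝕜]
  [AddCommGroup V] [Module 𝕜 V]

lemma quadraticForm_neg_le_polar {P : QuadraticForm 𝕜 V} (hP : ∀ f, 0 ≤ P f) {ε : 𝕜}
    (hε : 0 < ε) (g h : V) : -(ε * P g + ε⁻¹ * P h) ≤ QuadraticMap.polar P g h := by
  have key : 0 ≤ ε * ε * P g + P h + ε * QuadraticMap.polar P g h := by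
    simpa only [QuadraticMap.map_add P, QuadraticMap.map_smul, QuadraticMap.polar_smul_left,
      smul_eq_mul] using hP (ε • g + h)
  have : ε⁻¹ * (ε * ε * P g + P h + ε * QuadraticMap.polar P g h)
      = ε * P g + ε⁻¹ * P h + QuadraticMap.polar P g h := by
    field_simp
  linarith [mul_nonneg (inv_nonneg.2 hε.le) key]

lemma quadraticForm_map_add_le {P : QuadraticForm 𝕜 V} (hP : ∀ f, 0 ≤ P f) (g h : V) :
    P (g + h) ≤ 2 * P g + 2 * P h := by
  have := quadraticForm_neg_le_polar hP one_pos g (-h)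
  rw [QuadraticMap.polar_neg_right, QuadraticMap.map_neg] at this
  linarith [QuadraticMap.map_add P g h]

lemma exists_quadraticForm_half_mul_sub_le {N B : QuadraticForm 𝕜 V} (hN : ∀ f, 0 ≤ N f)
    {C ν : 𝕜} (hC : 0 ≤ C) (hB : ∀ f, -(C * N f) ≤ B f) (hν : 0 < ν) :
    ∃ R : QuadraticForm 𝕜 V, ∀ g h, ν * N g ≤ B g → ν / 2 * N g - R h ≤ B (g + h) := by
  set ε := ν / (2 * (ν + 2 * C))
  have hε : 0 < ε := by positivity
  have hε_mul : ε * (ν + 2 * C) = ν / 2 := by simp only [ε]; field_simp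
  have hε_one : ε ≤ 1 := by nlinarith
  refine ⟨ε⁻¹ • (B + (2 * C) • N) - B, fun g h hg => ?_⟩
  -- `B` itself is indefinite, so Young's inequality is applied to `B + C • N` and to `N`.
  have hP : ∀ f, 0 ≤ (B + C • N) f := fun f => neg_le_iff_add_nonneg.1 (hB f)
  have hpolarP := quadraticForm_neg_le_polar hP hε g h
  have hpolarN := quadraticForm_neg_le_polar hN hε g (-h)
  rw [FunLike.coe_add, FunLike.coe_smul, QuadraticMap.polar_add,
    QuadraticMap.polar_smul] at hpolarP
  rw [QuadraticMap.polar_neg_right, QuadraticMap.map_neg] at hpolarN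
  simp only [add_apply, sub_apply, smul_apply, Pi.add_apply, Pi.smul_apply, smul_eq_mul]
    at hpolarP ⊢
  have hcross :
      -(ε * (B g + 2 * C * N g) + ε⁻¹ * (B h + 2 * C * N h)) ≤ QuadraticMap.polar B g h := by
    linarith [mul_le_mul_of_nonneg_left hpolarN hC]
  have hcoer : ν / 2 * N g ≤ B g - ε * (B g + 2 * C * N g) := by
    linear_combination (1 - ε) * hg + N g * hε_mul
  linarith [QuadraticMap.map_add B g h]

end QuadraticForm

section Penalization

variable {V W : Type*} [AddCommGroup V] [Module ℝ V]
  [NormedAddCommGroup W] [NormedSpace ℝ W] [FiniteDimensional ℝ W]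

lemma exists_forall_quadraticForm_le_mul_norm_sq (P : QuadraticForm ℝ W) :
    ∃ D, 0 ≤ D ∧ ∀ y, P y ≤ D * ‖y‖ ^ 2 := by
  let b := P.polarBilin.toContinuousBilinearMap
  refine ⟨‖b‖, b.opNorm_nonneg, fun y => ?_⟩
  have hb : b y y = 2 * P y := by
    rw [LinearMap.toContinuousBilinearMap_apply, QuadraticMap.polarBilin_apply_apply,
      QuadraticMap.polar_self, two_nsmul, two_mul]
  have hbound : |b y y| ≤ ‖b‖ * ‖y‖ * ‖y‖ := b.le_opNorm₂ y y
  have hnonneg : 0 ≤ ‖b‖ * ‖y‖ * ‖y‖ := by positivity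
  nlinarith [le_abs_self (b y y)]

theorem exists_penalized_coercive_of_coercive_on_ker {N B : QuadraticForm ℝ V}
    (hN : ∀ f, 0 ≤ N f) {C ν : ℝ} (hC : 0 ≤ C) (hB : ∀ f, -(C * N f) ≤ B f) (hν : 0 < ν)
    (L : V →ₗ[ℝ] W) (hcoer : ∀ f, L f = 0 → ν * N f ≤ B f) :
    ∃ ν₁ > 0, ∃ ν₂ > 0, ∀ f, ν₁ * N f - ν₂ * ‖L f‖ ^ 2 ≤ B f := by
  obtain ⟨R, hR⟩ := exists_quadraticForm_half_mul_sub_le hN hC hB hν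
  obtain ⟨S, hS⟩ := exists_linearMap_apply_apply_apply_eq L
  obtain ⟨D, hD, hDbound⟩ :=
    exists_forall_quadraticForm_le_mul_norm_sq ((R + (ν / 2) • N).comp S)
  refine ⟨ν / 4, by positivity, D + 1, by positivity, fun f => ?_⟩
  have hker : L (f - S (L f)) = 0 := by rw [map_sub, hS, sub_self]
  have hBf : ν / 2 * N (f - S (L f)) - R (S (L f)) ≤ B f := by
    simpa only [sub_add_cancel] using hR (f - S (L f)) (S (L f)) (hcoer _ hker)
  have hNf : N f ≤ 2 * N (f - S (L f)) + 2 * N (S (L f)) := by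
    simpa only [sub_add_cancel] using quadraticForm_map_add_le hN (f - S (L f)) (S (L f))
  have hSf : R (S (L f)) + ν / 2 * N (S (L f)) ≤ D * ‖L f‖ ^ 2 := hDbound (L f)
  nlinarith [sq_nonneg ‖L f‖, mul_le_mul_of_nonneg_left hNf hν.le]

end Penalization

section SquareIntegrable

variable {α : Type*} [MeasurableSpace α] (μ : Measure α)

/-- The real functions whose square is `μ`-integrable, without the identification of almost
everywhere equal functions made in `Lp ℝ 2 μ`. -/
def squareIntegrable : Submodule ℝ (α → ℝ) where
  carrier := {f | MemLp f 2 μ}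
  add_mem' := MemLp.add
  zero_mem' := MemLp.zero
  smul_mem' c _ hf := hf.const_smul c

variable {μ}

lemma integrable_mul_of_squareIntegrable (f g : squareIntegrable μ) :
    Integrable (fun x => f.1 x * g.1 x) μ :=
  MemLp.integrable_mul f.2 g.2

variable (μ) in
/-- The `L²` inner product as a bilinear form on square-integrable functions. -/
def l2Pairing : LinearMap.BilinForm ℝ (squareIntegrable μ) :=
  LinearMap.mk₂ ℝ (fun f g => ∫ x, f.1 x * g.1 x ∂μ)
    (fun f f' g => by
      rw [← integral_add (integrable_mul_of_squareIntegrable f g)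
        (integrable_mul_of_squareIntegrable f' g)]
      simp only [Submodule.coe_add, Pi.add_apply, add_mul])
    (fun c f g => by
      simp only [Submodule.coe_smul, Pi.smul_apply, smul_eq_mul, mul_assoc, integral_const_mul])
    (fun f g g' => by
      rw [← integral_add (integrable_mul_of_squareIntegrable f g)
        (integrable_mul_of_squareIntegrable f g')]
      simp only [Submodule.coe_add, Pi.add_apply, mul_add])
    (fun c f g => by
      simp only [Submodule.coe_smul, Pi.smul_apply, smul_eq_mul, mul_left_comm,
        integral_const_mul])

lemma l2Pairing_self_nonneg (f : squareIntegrable μ) : 0 ≤ l2Pairing μ f f :=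
  integral_nonneg fun x => mul_self_nonneg (f.1 x)

/-- Multiplication by an essentially bounded function, on square-integrable functions. -/
def mulBounded (V : α → ℝ) (hV : MemLp V ⊤ μ) : squareIntegrable μ →ₗ[ℝ] squareIntegrable μ where
  toFun f := ⟨fun x => V x * f.1 x, MemLp.mul' f.2 hV⟩
  map_add' _ _ := Subtype.ext (funext fun _ => mul_add _ _ _)
  map_smul' _ _ := Subtype.ext (funext fun _ => mul_left_comm _ _ _)

lemma l2Pairing_mulBounded_self_le {V : α → ℝ} (hV : MemLp V ⊤ μ) (f : squareIntegrable μ) :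
    l2Pairing μ (mulBounded V hV f) f ≤ lpNorm V ⊤ μ * l2Pairing μ f f := by
  change ∫ x, V x * f.1 x * f.1 x ∂μ ≤ lpNorm V ⊤ μ * ∫ x, f.1 x * f.1 x ∂μ
  rw [← integral_const_mul]
  refine integral_mono_ae (integrable_mul_of_squareIntegrable (mulBounded V hV f) f)
    ((integrable_mul_of_squareIntegrable f f).const_mul _) ?_
  filter_upwards [ae_le_lpNorm_exponent_top hV] with x hx
  rw [mul_assoc]
  exact mul_le_mul_of_nonneg_right ((Real.le_norm_self _).trans hx) (mul_self_nonneg _)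

lemma memLp_top_rpow_const {f : α → ℝ} (hf : MemLp f ⊤ μ) (hf0 : ∀ x, 0 ≤ f x) {p : ℝ}
    (hp : 0 ≤ p) : MemLp (fun x => f x ^ p) ⊤ μ := by
  simpa only [Real.norm_of_nonneg (hf0 _), ENNReal.toReal_ofReal hp,
    ENNReal.top_div_of_ne_top ENNReal.ofReal_ne_top] using hf.norm_rpow_div (ENNReal.ofReal p)

lemma memLp_two_of_sq_le {u v : α → ℝ} (hu : AEStronglyMeasurable u μ) (hv : Integrable v μ)
    (huv : ∀ x, u x ^ 2 ≤ v x) : MemLp u 2 μ := by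
  rw [memLp_two_iff_integrable_sq hu]
  exact hv.mono' (hu.pow 2) (.of_forall fun x =>
    (Real.norm_of_nonneg (sq_nonneg (u x))).trans_le (huv x))

lemma memLp_mul_of_norm_le {p : ENNReal} {m A w : α → ℝ}
    (hm : AEStronglyMeasurable m μ) (hw : AEStronglyMeasurable w μ)
    (hmA : ∀ x, ‖m x‖ ≤ ‖A x‖) (hA : MemLp (fun x => A x * w x) p μ) :
    MemLp (fun x => m x * w x) p μ :=
  hA.mono (hm.mul hw) (.of_forall fun x => by
    simpa only [norm_mul] using mul_le_mul_of_nonneg_right (hmA x) (norm_nonneg (w x)))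

lemma memLp_of_memLp_mul {p : ENNReal} {A w : α → ℝ} (hw : AEStronglyMeasurable w μ)
    (hone : ∀ x, 1 ≤ ‖A x‖) (hA : MemLp (fun x => A x * w x) p μ) : MemLp w p μ :=
  hA.mono hw (.of_forall fun x => by
    simpa only [norm_mul] using le_mul_of_one_le_left (norm_nonneg (w x)) (hone x))

end SquareIntegrable

section Decay

variable {E : Type*} [NormedAddCommGroup E]

lemma one_add_norm_pow_mul_exp_neg_le {δ : ℝ} (hδ : 0 < δ) (n : ℕ) (x : E) :
    (1 + ‖x‖) ^ n * Real.exp (-δ * ‖x‖) ≤ n.factorial / δ ^ n * Real.exp δ := by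
  have hexp : Real.exp (δ * (1 + ‖x‖)) * Real.exp (-δ * ‖x‖) = Real.exp δ := by
    rw [← Real.exp_add]; ring_nf
  have hpow : (1 + ‖x‖) ^ n ≤ n.factorial / δ ^ n * Real.exp (δ * (1 + ‖x‖)) := by
    have := Real.pow_div_factorial_le_exp (δ * (1 + ‖x‖)) (by positivity) n
    rw [div_le_iff₀ (by positivity), mul_pow] at this
    rw [div_mul_eq_mul_div, le_div_iff₀ (by positivity)]
    linarith
  calc (1 + ‖x‖) ^ n * Real.exp (-δ * ‖x‖)
      ≤ n.factorial / δ ^ n * Real.exp (δ * (1 + ‖x‖)) * Real.exp (-δ * ‖x‖) := by gcongr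
    _ = n.factorial / δ ^ n * Real.exp δ := by rw [mul_assoc, hexp]

variable [MeasurableSpace E] {μ : Measure E} {p : ENNReal} {w : E → ℝ}

lemma memLp_one_add_norm_pow_mul_of_exp_decay [BorelSpace E] [SecondCountableTopology E]
    [μ.HasTemperateGrowth] (hw : Continuous w) {C δ : ℝ} (hδ : 0 < δ)
    (hdecay : ∀ x, |w x| ≤ C * Real.exp (-δ * ‖x‖)) (k : ℕ) :
    MemLp (fun x => (1 + ‖x‖) ^ k * w x) p μ := by
  obtain ⟨m, hm⟩ := Measure.HasTemperateGrowth.exists_eLpNorm_lt_top p ‹μ.HasTemperateGrowth›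
  have hm_meas : AEStronglyMeasurable (fun x : E => (1 + ‖x‖) ^ (-m : ℝ)) μ :=
    (Continuous.rpow_const (by fun_prop) fun x => .inl (by positivity)).aestronglyMeasurable
  set A := (k + m).factorial / δ ^ (k + m) * Real.exp δ
  refine MemLp.mono' (g := fun x => C * A * (1 + ‖x‖) ^ (-m : ℝ))
    (MemLp.const_mul ⟨hm_meas, hm⟩ _) (by fun_prop) (.of_forall fun x => ?_)
  have hC : 0 ≤ C := nonneg_of_mul_nonneg_left ((abs_nonneg _).trans (hdecay x)) (Real.exp_pos _)
  have hpos : (0 : ℝ) < 1 + ‖x‖ := by positivity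
  rw [Real.rpow_neg hpos.le, Real.rpow_natCast, ← div_eq_mul_inv, le_div_iff₀ (by positivity),
    norm_mul, norm_pow, Real.norm_of_nonneg hpos.le, Real.norm_eq_abs]
  calc (1 + ‖x‖) ^ k * |w x| * (1 + ‖x‖) ^ m
      ≤ (1 + ‖x‖) ^ k * (C * Real.exp (-δ * ‖x‖)) * (1 + ‖x‖) ^ m := by gcongr; exact hdecay x
    _ = C * ((1 + ‖x‖) ^ (k + m) * Real.exp (-δ * ‖x‖)) := by ring
    _ ≤ C * A := by gcongr; exact one_add_norm_pow_mul_exp_neg_le hδ (k + m) x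

end Decay

section Sobolev

variable {d : ℕ} {f g : EuclideanSpace ℝ (Fin d) → ℝ}

lemma pd_add (hf : ContDiff ℝ 1 f) (hg : ContDiff ℝ 1 g) (i : Fin d) :
    pd (f + g) i = pd f i + pd g i := by
  ext x
  simp only [pd, Pi.add_apply]
  rw [fderiv_add (hf.differentiable one_ne_zero x) (hg.differentiable one_ne_zero x),
    add_apply]

lemma pd_const_smul (c : ℝ) (f : EuclideanSpace ℝ (Fin d) → ℝ) (i : Fin d) :
    pd (c • f) i = c • pd f i := by
  ext x
  simp only [pd, fderiv_const_smul_field, Pi.smul_apply, smul_apply]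

lemma continuous_pd (hf : ContDiff ℝ 1 f) (i : Fin d) : Continuous (pd f i) :=
  (hf.continuous_fderiv one_ne_zero).clm_apply continuous_const

variable (d) in
/-- The real-valued `C¹` functions on `ℝ^d` which are square integrable together with their first
partial derivatives. This is the space of the components `f₁`, `f₂` in `IsH1 f₁ f₂`. -/
def sobolevH1 : Submodule ℝ (EuclideanSpace ℝ (Fin d) → ℝ) where
  carrier := {f | ContDiff ℝ 1 f ∧ MemLp f 2 volume ∧ ∀ i, MemLp (pd f i) 2 volume}
  add_mem' := by
    rintro f g ⟨hf, hf₂, hdf⟩ ⟨hg, hg₂, hdg⟩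
    exact ⟨hf.add hg, hf₂.add hg₂, fun i => pd_add hf hg i ▸ (hdf i).add (hdg i)⟩
  zero_mem' := ⟨contDiff_const, MemLp.zero, fun i => by
    have : pd (0 : EuclideanSpace ℝ (Fin d) → ℝ) i = 0 := by
      simpa only [zero_smul] using pd_const_smul 0 0 i
    rw [this]
    exact MemLp.zero⟩
  smul_mem' := by
    rintro c f ⟨hf, hf₂, hdf⟩
    exact ⟨hf.const_smul c, hf₂.const_smul c, fun i =>
      pd_const_smul c f i ▸ (hdf i).const_smul c⟩

variable (d) in
/-- The inclusion of `H¹` into `L²`. -/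
def sobolevToL2 :
    sobolevH1 d →ₗ[ℝ] squareIntegrable (volume : Measure (EuclideanSpace ℝ (Fin d))) :=
  Submodule.inclusion fun _ hf => hf.2.1

/-- The `i`-th partial derivative as a linear map from `H¹` to `L²`. -/
def sobolevPd (i : Fin d) :
    sobolevH1 d →ₗ[ℝ] squareIntegrable (volume : Measure (EuclideanSpace ℝ (Fin d))) where
  toFun f := ⟨pd f.1 i, f.2.2.2 i⟩
  map_add' f g := Subtype.ext (pd_add f.2.1 g.2.1 i)
  map_smul' c f := Subtype.ext (pd_const_smul c f.1 i)

variable (d) in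
/-- The squared `H¹` norm `∫ |∇f|² + f²` of a real-valued function. -/
def sobolevForm : QuadraticForm ℝ (sobolevH1 d) :=
  ∑ i, (l2Pairing volume).toQuadraticMap.comp (sobolevPd i)
    + (l2Pairing volume).toQuadraticMap.comp (sobolevToL2 d)

/-- The quadratic form `∫ |∇f|² + f² - V f²` of the Schrödinger operator `-Δ + 1 - V`. -/
def schrodingerForm (V : EuclideanSpace ℝ (Fin d) → ℝ) (hV : MemLp V ⊤ volume) :
    QuadraticForm ℝ (sobolevH1 d) :=
  sobolevForm d -
    ((l2Pairing volume).comp (mulBounded V hV) .id).toQuadraticMap.comp (sobolevToL2 d)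

lemma sobolevForm_apply (f : sobolevH1 d) :
    sobolevForm d f = ∑ i, l2Pairing volume (sobolevPd i f) (sobolevPd i f)
      + l2Pairing volume (sobolevToL2 d f) (sobolevToL2 d f) := by
  simp only [sobolevForm, add_apply, sum_apply, QuadraticMap.comp_apply,
    LinearMap.BilinMap.toQuadraticMap_apply]

lemma schrodingerForm_apply {V : EuclideanSpace ℝ (Fin d) → ℝ} (hV : MemLp V ⊤ volume)
    (f : sobolevH1 d) : schrodingerForm V hV f = sobolevForm d f
      - l2Pairing volume (mulBounded V hV (sobolevToL2 d f)) (sobolevToL2 d f) :=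
  rfl

lemma sobolevForm_nonneg (f : sobolevH1 d) : 0 ≤ sobolevForm d f := by
  rw [sobolevForm_apply]
  exact add_nonneg (Finset.sum_nonneg fun _ _ => l2Pairing_self_nonneg _)
    (l2Pairing_self_nonneg _)

lemma neg_lpNorm_mul_sobolevForm_le_schrodingerForm {V : EuclideanSpace ℝ (Fin d) → ℝ}
    (hV : MemLp V ⊤ volume) (f : sobolevH1 d) :
    -(lpNorm V ⊤ volume * sobolevForm d f) ≤ schrodingerForm V hV f := by
  have hL2 : l2Pairing volume (sobolevToL2 d f) (sobolevToL2 d f) ≤ sobolevForm d f := by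
    rw [sobolevForm_apply]
    exact le_add_of_nonneg_left (Finset.sum_nonneg fun _ _ => l2Pairing_self_nonneg _)
  rw [schrodingerForm_apply]
  linarith [sobolevForm_nonneg f, l2Pairing_mulBounded_self_le hV (sobolevToL2 d f),
    mul_le_mul_of_nonneg_left hL2 (lpNorm_nonneg (f := V) (p := ⊤) (μ := volume))]

lemma integrable_sum_pd_sq_add_sq (f : sobolevH1 d) :
    Integrable (fun x => (∑ i, pd f.1 i x ^ 2) + f.1 x ^ 2) :=
  (integrable_finsetSum _ fun i _ => (f.2.2.2 i).integrable_sq).add f.2.2.1.integrable_sq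

lemma sobolevForm_eq_integral (f : sobolevH1 d) :
    sobolevForm d f = ∫ x, ((∑ i, pd f.1 i x ^ 2) + f.1 x ^ 2) := by
  have hpd : ∀ i, Integrable (fun x => pd f.1 i x ^ 2) := fun i => (f.2.2.2 i).integrable_sq
  rw [integral_add (integrable_finsetSum _ fun i _ => hpd i) f.2.2.1.integrable_sq,
    integral_finsetSum _ fun i _ => hpd i, sobolevForm_apply]
  simp only [pow_two]
  rfl

lemma schrodingerForm_eq_integral {V : EuclideanSpace ℝ (Fin d) → ℝ} (hV : MemLp V ⊤ volume)
    (f : sobolevH1 d) : schrodingerForm V hV f =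
      ∫ x, ((∑ i, pd f.1 i x ^ 2) + f.1 x ^ 2 - V x * f.1 x ^ 2) := by
  have hVf : Integrable (fun x => V x * f.1 x * f.1 x) :=
    integrable_mul_of_squareIntegrable (mulBounded V hV (sobolevToL2 d f)) (sobolevToL2 d f)
  have hsub := integral_sub (integrable_sum_pd_sq_add_sq f) hVf
  simp only [mul_assoc, ← pow_two] at hsub
  rw [hsub, ← sobolevForm_eq_integral, schrodingerForm_apply]
  simp only [pow_two, ← mul_assoc]
  rfl

lemma isH1_iff {f₁ f₂ : EuclideanSpace ℝ (Fin d) → ℝ} :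
    IsH1 f₁ f₂ ↔ f₁ ∈ sobolevH1 d ∧ f₂ ∈ sobolevH1 d := by
  constructor
  · rintro ⟨hf₁, hf₂, hsq, hpd⟩
    have hle : ∀ i x, pd f₁ i x ^ 2 + pd f₂ i x ^ 2 ≤ ∑ i, (pd f₁ i x ^ 2 + pd f₂ i x ^ 2) :=
      fun i x => Finset.single_le_sum (f := fun i => pd f₁ i x ^ 2 + pd f₂ i x ^ 2)
        (fun _ _ => by positivity) (Finset.mem_univ i)
    refine ⟨⟨hf₁, ?_, fun i => ?_⟩, ⟨hf₂, ?_, fun i => ?_⟩⟩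
    · exact memLp_two_of_sq_le hf₁.continuous.aestronglyMeasurable hsq fun x =>
        le_add_of_nonneg_right (sq_nonneg _)
    · exact memLp_two_of_sq_le (continuous_pd hf₁ i).aestronglyMeasurable hpd
        fun x => (le_add_of_nonneg_right (sq_nonneg _)).trans (hle i x)
    · exact memLp_two_of_sq_le hf₂.continuous.aestronglyMeasurable hsq fun x =>
        le_add_of_nonneg_left (sq_nonneg _)
    · exact memLp_two_of_sq_le (continuous_pd hf₂ i).aestronglyMeasurable hpd
        fun x => (le_add_of_nonneg_left (sq_nonneg _)).trans (hle i x)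
  · rintro ⟨⟨hf₁, hsq₁, hpd₁⟩, hf₂, hsq₂, hpd₂⟩
    exact ⟨hf₁, hf₂, hsq₁.integrable_sq.add hsq₂.integrable_sq,
      integrable_finsetSum _ fun i _ => (hpd₁ i).integrable_sq.add (hpd₂ i).integrable_sq⟩

lemma H1normSq_eq_sobolevForm_add (f₁ f₂ : sobolevH1 d) :
    H1normSq f₁.1 f₂.1 = sobolevForm d f₁ + sobolevForm d f₂ := by
  obtain ⟨-, -, hsq, hpd⟩ := isH1_iff.2 ⟨f₁.2, f₂.2⟩
  rw [H1normSq, ← integral_add hsq hpd, sobolevForm_eq_integral, sobolevForm_eq_integral,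
    ← integral_add (integrable_sum_pd_sq_add_sq f₁) (integrable_sum_pd_sq_add_sq f₂)]
  refine integral_congr_ae (.of_forall fun x => ?_)
  simp only [Finset.sum_add_distrib]
  ring

lemma Bform_eq_schrodingerForm_add {Q : EuclideanSpace ℝ (Fin d) → ℝ}
    (hQ : MemLp (fun x => Q x ^ ((4 : ℝ) / d)) ⊤ volume) (f₁ f₂ : sobolevH1 d) :
    Bform Q f₁.1 f₂.1 = schrodingerForm _ (hQ.const_mul (1 + 4 / (d : ℝ))) f₁
      + schrodingerForm _ hQ f₂ := by
  rw [schrodingerForm_eq_integral, schrodingerForm_eq_integral, Bform]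

section Constraint

variable {ι κ : Type*}
  (a : ι → squareIntegrable (volume : Measure (EuclideanSpace ℝ (Fin d))))
  (b : κ → squareIntegrable (volume : Measure (EuclideanSpace ℝ (Fin d))))

/-- The tuple of `L²` pairings of `f₁` with the weights `a` and of `f₂` with the weights `b`; its
kernel is the set of pairs satisfying the corresponding orthogonality conditions. -/
def constraintMap :
    sobolevH1 d × sobolevH1 d →ₗ[ℝ] EuclideanSpace ℝ (ι ⊕ κ) :=
  (WithLp.linearEquiv 2 ℝ (ι ⊕ κ → ℝ)).symm.toLinearMap ∘ₗ LinearMap.pi (Sum.elim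
    (fun i => l2Pairing volume (a i) ∘ₗ sobolevToL2 d ∘ₗ LinearMap.fst ℝ _ _)
    (fun i => l2Pairing volume (b i) ∘ₗ sobolevToL2 d ∘ₗ LinearMap.snd ℝ _ _))

lemma constraintMap_eq_zero_iff (f : sobolevH1 d × sobolevH1 d) :
    constraintMap a b f = 0 ↔
      (∀ i, ∫ x, (a i).1 x * f.1.1 x = 0) ∧ ∀ i, ∫ x, (b i).1 x * f.2.1 x = 0 := by
  rw [PiLp.ext_iff, Sum.forall]
  rfl

lemma norm_sq_constraintMap [Fintype ι] [Fintype κ] (f : sobolevH1 d × sobolevH1 d) :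
    ‖constraintMap a b f‖ ^ 2 =
      ∑ i, (∫ x, (a i).1 x * f.1.1 x) ^ 2 + ∑ i, (∫ x, (b i).1 x * f.2.1 x) ^ 2 := by
  rw [EuclideanSpace.real_norm_sq_eq, Fintype.sum_sum_type]
  rfl

theorem exists_penalized_coercive_schrodingerForm [Fintype ι] [Fintype κ]
    {V W : EuclideanSpace ℝ (Fin d) → ℝ} (hV : MemLp V ⊤ volume) (hW : MemLp W ⊤ volume)
    {ν : ℝ} (hν : 0 < ν)
    (hcoer : ∀ f₁ f₂, constraintMap a b (f₁, f₂) = 0 →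
      ν * (sobolevForm d f₁ + sobolevForm d f₂) ≤
        schrodingerForm V hV f₁ + schrodingerForm W hW f₂) :
    ∃ ν₁ > 0, ∃ ν₂ > 0, ∀ f₁ f₂,
      ν₁ * (sobolevForm d f₁ + sobolevForm d f₂) - ν₂ * ‖constraintMap a b (f₁, f₂)‖ ^ 2 ≤
        schrodingerForm V hV f₁ + schrodingerForm W hW f₂ := by
  have hbound : ∀ f, -((lpNorm V ⊤ volume + lpNorm W ⊤ volume) *
      (sobolevForm d).prod (sobolevForm d) f) ≤
        (schrodingerForm V hV).prod (schrodingerForm W hW) f := by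
    rintro ⟨f₁, f₂⟩
    simp only [QuadraticMap.prod_apply]
    linarith [neg_lpNorm_mul_sobolevForm_le_schrodingerForm hV f₁,
      neg_lpNorm_mul_sobolevForm_le_schrodingerForm hW f₂,
      mul_nonneg (lpNorm_nonneg (f := V) (p := ⊤) (μ := volume)) (sobolevForm_nonneg f₂),
      mul_nonneg (lpNorm_nonneg (f := W) (p := ⊤) (μ := volume)) (sobolevForm_nonneg f₁)]
  obtain ⟨ν₁, hν₁, ν₂, hν₂, h⟩ := exists_penalized_coercive_of_coercive_on_ker
    (N := (sobolevForm d).prod (sobolevForm d))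
    (B := (schrodingerForm V hV).prod (schrodingerForm W hW))
    (C := lpNorm V ⊤ volume + lpNorm W ⊤ volume)
    (fun f => add_nonneg (sobolevForm_nonneg _) (sobolevForm_nonneg _))
    (add_nonneg lpNorm_nonneg lpNorm_nonneg)
    hbound hν (constraintMap a b) (fun f => hcoer f.1 f.2)
  exact ⟨ν₁, hν₁, ν₂, hν₂, fun f₁ f₂ => h (f₁, f₂)⟩

end Constraint

end Sobolev

section Weights

variable {d : ℕ} {Q ρ : EuclideanSpace ℝ (Fin d) → ℝ}

/-- The weights `Q`, `|x|² Q`, `x_j Q` against which `InKset` tests the real part. -/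
def realWeights (Q : EuclideanSpace ℝ (Fin d) → ℝ) :
    Fin 2 ⊕ Fin d → EuclideanSpace ℝ (Fin d) → ℝ :=
  Sum.elim ![Q, fun x => ‖x‖ ^ 2 * Q x] fun j x => x j * Q x

/-- The weights `ΛQ`, `ρ`, `∂_j Q` against which `InKset` tests the imaginary part. -/
def imagWeights (Q ρ : EuclideanSpace ℝ (Fin d) → ℝ) :
    Fin 2 ⊕ Fin d → EuclideanSpace ℝ (Fin d) → ℝ :=
  Sum.elim ![fun x => (d : ℝ) / 2 * Q x + ∑ i, x i * pd Q i x, ρ] (pd Q)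

lemma inKset_of_forall_integral_eq_zero {f₁ f₂ : EuclideanSpace ℝ (Fin d) → ℝ}
    (hf₁ : ∀ i, ∫ x, realWeights Q i x * f₁ x = 0)
    (hf₂ : ∀ i, ∫ x, imagWeights Q ρ i x * f₂ x = 0) : InKset Q ρ f₁ f₂ :=
  ⟨hf₁ (.inl 0), fun j => hf₁ (.inr j), hf₁ (.inl 1), fun j => hf₂ (.inr j), hf₂ (.inl 0),
    hf₂ (.inl 1)⟩

lemma memLp_realWeights {p : ENNReal} (hQ : AEStronglyMeasurable Q volume)
    (hQp : MemLp (fun x => (1 + ‖x‖) ^ 2 * Q x) p volume) :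
    ∀ i, MemLp (realWeights Q i) p volume := by
  have hnorm : ∀ x : EuclideanSpace ℝ (Fin d), ‖(1 + ‖x‖) ^ 2‖ = (1 + ‖x‖) ^ 2 := fun x =>
    Real.norm_of_nonneg (by positivity)
  rw [Sum.forall, Fin.forall_fin_two]
  refine ⟨⟨memLp_of_memLp_mul hQ (fun x => ?_) hQp,
    memLp_mul_of_norm_le (by fun_prop) hQ (fun x => ?_) hQp⟩,
    fun j => memLp_mul_of_norm_le (by fun_prop) hQ (fun x => ?_) hQp⟩
  · rw [hnorm]
    nlinarith [norm_nonneg x]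
  · rw [hnorm, norm_pow, norm_norm]
    nlinarith [norm_nonneg x]
  · rw [hnorm]
    nlinarith [PiLp.norm_apply_le x j, norm_nonneg x]

lemma memLp_imagWeights {p : ENNReal} (hQ : ContDiff ℝ 1 Q) (hQp : MemLp Q p volume)
    (hdQ : ∀ i, MemLp (fun x => (1 + ‖x‖) * pd Q i x) p volume) (hρ : MemLp ρ p volume) :
    ∀ i, MemLp (imagWeights Q ρ i) p volume := by
  have hmeas : ∀ i, AEStronglyMeasurable (pd Q i) volume := fun i =>
    (continuous_pd hQ i).aestronglyMeasurable
  have hnorm : ∀ x : EuclideanSpace ℝ (Fin d), ‖1 + ‖x‖‖ = 1 + ‖x‖ := fun x =>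
    Real.norm_of_nonneg (by positivity)
  rw [Sum.forall, Fin.forall_fin_two]
  refine ⟨⟨(hQp.const_mul _).add (memLp_finsetSum _ fun i _ =>
    memLp_mul_of_norm_le (by fun_prop) (hmeas i) (fun x => ?_) (hdQ i)), hρ⟩,
    fun j => memLp_of_memLp_mul (hmeas j) (fun x => ?_) (hdQ j)⟩
  · linarith [PiLp.norm_apply_le x i, hnorm x]
  · linarith [hnorm x, norm_nonneg x]

end Weights

theorem coercivity_penalized_general (d : ℕ) (hd : 1 ≤ d)
    (Q : EuclideanSpace ℝ (Fin d) → ℝ) (hQ : ContDiff ℝ 1 Q) (hQ_nonneg : ∀ x, 0 ≤ Q x)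
    (hQ_top : MemLp Q ⊤ volume) (hQ_two : MemLp (fun x => (1 + ‖x‖) ^ 2 * Q x) 2 volume)
    (hdQ_two : ∀ i, MemLp (fun x => (1 + ‖x‖) * pd Q i x) 2 volume)
    (ρ : EuclideanSpace ℝ (Fin d) → ℝ) (hρ : MemLp ρ 2 volume)
    (hcoer : ∃ ν > (0 : ℝ), ∀ f₁ f₂ : EuclideanSpace ℝ (Fin d) → ℝ,
      IsH1 f₁ f₂ → InKset Q ρ f₁ f₂ → Bform Q f₁ f₂ ≥ ν * H1normSq f₁ f₂) :
    ∃ ν₁ > (0 : ℝ), ∃ ν₂ > (0 : ℝ), ∀ f₁ f₂ : EuclideanSpace ℝ (Fin d) → ℝ,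
      IsH1 f₁ f₂ →
      Bform Q f₁ f₂ ≥ ν₁ * H1normSq f₁ f₂
        - ν₂ * ((∫ x : EuclideanSpace ℝ (Fin d), Q x * f₁ x) ^ 2
          + (∑ j, (∫ x : EuclideanSpace ℝ (Fin d), x j * Q x * f₁ x) ^ 2)
          + (∫ x : EuclideanSpace ℝ (Fin d), ‖x‖ ^ 2 * Q x * f₁ x) ^ 2
          + (∑ j, (∫ x : EuclideanSpace ℝ (Fin d), pd Q j x * f₂ x) ^ 2)
          + (∫ x : EuclideanSpace ℝ (Fin d),
              ((d : ℝ) / 2 * Q x + ∑ i, x i * pd Q i x) * f₂ x) ^ 2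
          + (∫ x : EuclideanSpace ℝ (Fin d), ρ x * f₂ x) ^ 2) := by
  obtain ⟨ν, hν, hcoer⟩ := hcoer
  have hpot : MemLp (fun x => Q x ^ ((4 : ℝ) / d)) ⊤ volume :=
    memLp_top_rpow_const hQ_top hQ_nonneg (div_pos four_pos (Nat.cast_pos.2 hd)).le
  have hreal := memLp_realWeights hQ.continuous.aestronglyMeasurable hQ_two
  have himag := memLp_imagWeights hQ (hreal (.inl 0)) hdQ_two hρ
  obtain ⟨ν₁, hν₁, ν₂, hν₂, h⟩ := exists_penalized_coercive_schrodingerForm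
    (fun i => ⟨realWeights Q i, hreal i⟩) (fun i => ⟨imagWeights Q ρ i, himag i⟩)
    (hpot.const_mul (1 + 4 / (d : ℝ))) hpot hν fun f₁ f₂ hf => by
      rw [← H1normSq_eq_sobolevForm_add, ← Bform_eq_schrodingerForm_add]
      obtain ⟨hf₁, hf₂⟩ := (constraintMap_eq_zero_iff _ _ _).1 hf
      exact hcoer _ _ (isH1_iff.2 ⟨f₁.2, f₂.2⟩) (inKset_of_forall_integral_eq_zero hf₁ hf₂)
  refine ⟨ν₁, hν₁, ν₂, hν₂, fun f₁ f₂ hf => ?_⟩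
  have hle := h ⟨f₁, (isH1_iff.1 hf).1⟩ ⟨f₂, (isH1_iff.1 hf).2⟩
  rw [← H1normSq_eq_sobolevForm_add, ← Bform_eq_schrodingerForm_add, norm_sq_constraintMap,
    Fintype.sum_sum_type, Fintype.sum_sum_type, Fin.sum_univ_two, Fin.sum_univ_two] at hle
  refine le_of_eq_of_le ?_ hle
  simp only [realWeights, imagWeights, Sum.elim_inl, Sum.elim_inr, Matrix.cons_val_zero,
    Matrix.cons_val_one]
  ring

/-- the coercivity of `B` on `K` upgrades to a penalized coercivity on
every `H¹` function. -/
theorem coercivity_penalized (d : ℕ) (hd : 1 ≤ d)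
    (Q : EuclideanSpace ℝ (Fin d) → ℝ)
    (hQsmooth : ContDiff ℝ (⊤ : ℕ∞) Q) (hQpos : ∀ x, 0 < Q x)
    (hQradial : ∀ x y : EuclideanSpace ℝ (Fin d), ‖x‖ = ‖y‖ → Q x = Q y)
    (hQsol : ∀ x, lap Q x - Q x + Q x ^ ((1 : ℝ) + 4 / d) = 0)
    (C₀ δ₀ : ℝ) (hC₀ : 0 < C₀) (hδ₀ : 0 < δ₀)
    (hQdecay : ∀ x : EuclideanSpace ℝ (Fin d),
      |Q x| ≤ C₀ * Real.exp (-δ₀ * ‖x‖) ∧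
      (∀ i, |pd Q i x| ≤ C₀ * Real.exp (-δ₀ * ‖x‖)) ∧
      (∀ i j, |pd (pd Q i) j x| ≤ C₀ * Real.exp (-δ₀ * ‖x‖)))
    (ρ : EuclideanSpace ℝ (Fin d) → ℝ)
    (hρsmooth : ContDiff ℝ 2 ρ)
    (hρradial : ∀ x y : EuclideanSpace ℝ (Fin d), ‖x‖ = ‖y‖ → ρ x = ρ y)
    (hρeq : ∀ x, -lap ρ x + ρ x - (1 + 4 / (d : ℝ)) * Q x ^ ((4 : ℝ) / d) * ρ x
      = -(‖x‖ ^ 2 * Q x))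
    (hρdecay : ∀ x : EuclideanSpace ℝ (Fin d),
      |ρ x| + Real.sqrt (∑ i, pd ρ i x ^ 2) ≤ C₀ * Real.exp (-δ₀ * ‖x‖))
    (hcoer : ∃ ν > (0 : ℝ), ∀ f₁ f₂ : EuclideanSpace ℝ (Fin d) → ℝ,
      IsH1 f₁ f₂ → InKset Q ρ f₁ f₂ → Bform Q f₁ f₂ ≥ ν * H1normSq f₁ f₂) :
    ∃ ν₁ > (0 : ℝ), ∃ ν₂ > (0 : ℝ), ∀ f₁ f₂ : EuclideanSpace ℝ (Fin d) → ℝ,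
      IsH1 f₁ f₂ →
      Bform Q f₁ f₂ ≥ ν₁ * H1normSq f₁ f₂
        - ν₂ * ((∫ x : EuclideanSpace ℝ (Fin d), Q x * f₁ x) ^ 2
          + (∑ j, (∫ x : EuclideanSpace ℝ (Fin d), x j * Q x * f₁ x) ^ 2)
          + (∫ x : EuclideanSpace ℝ (Fin d), ‖x‖ ^ 2 * Q x * f₁ x) ^ 2
          + (∑ j, (∫ x : EuclideanSpace ℝ (Fin d), pd Q j x * f₂ x) ^ 2)
          + (∫ x : EuclideanSpace ℝ (Fin d),
              ((d : ℝ) / 2 * Q x + ∑ i, x i * pd Q i x) * f₂ x) ^ 2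
          + (∫ x : EuclideanSpace ℝ (Fin d), ρ x * f₂ x) ^ 2) := by
  have hQ₁ : ContDiff ℝ 1 Q := hQsmooth.of_le (by exact_mod_cast le_top)
  have hQ_mem : ∀ (p : ENNReal) k, MemLp (fun x => (1 + ‖x‖) ^ k * Q x) p volume := fun p k =>
    memLp_one_add_norm_pow_mul_of_exp_decay hQ₁.continuous hδ₀ (fun x => (hQdecay x).1) k
  have hdQ_mem : ∀ i, MemLp (fun x => (1 + ‖x‖) ^ 1 * pd Q i x) 2 volume := fun i =>
    memLp_one_add_norm_pow_mul_of_exp_decay (continuous_pd hQ₁ i) hδ₀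
      (fun x => (hQdecay x).2.1 i) 1
  have hρ_mem : MemLp (fun x => (1 + ‖x‖) ^ 0 * ρ x) 2 volume :=
    memLp_one_add_norm_pow_mul_of_exp_decay hρsmooth.continuous hδ₀
      (fun x => (le_add_of_nonneg_right (Real.sqrt_nonneg _)).trans (hρdecay x)) 0
  exact coercivity_penalized_general d hd Q hQ₁ (fun x => (hQpos x).le)
    (by simpa only [pow_zero, one_mul] using hQ_mem ⊤ 0) (hQ_mem 2 2)
    (by simpa only [pow_one] using hdQ_mem) ρ
    (by simpa only [pow_zero, one_mul] using hρ_mem) hcoer
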